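/- arXiv:0801.2939 — 3 statements merged into one kernel-verified Lean document; each statement's English description precedes it below -/
import Mathlib

section
/- Let 𝓗 = (V, 𝓔) and 𝓗' = (V', 𝓔') be hypergraphs with V = {1,...,n} and V' = {1,...,m}. Then 𝓗 ⪯ 𝓗' (there is a quotient map from 𝓗' to 𝓗) if and only if f_𝓗 ≤ f_{𝓗'} (the Boolean function of 𝓗 is a simple minor of that of 𝓗'). -/
open Finset

abbrev BF := Σ n : ℕ, (Fin n → Bool) → Bool

def Minor (g f : BF) : Prop :=
  ∃ σ : Fin f.1 → Fin g.1, ∀ a : Fin g.1 → Bool, g.2 a = f.2 (a ∘ σ)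

def EquivBF (f g : BF) : Prop := Minor f g ∧ Minor g f

def StrictMinor (g f : BF) : Prop := Minor g f ∧ ¬ Minor f g

def Essential {n : ℕ} (f : (Fin n → Bool) → Bool) (i : Fin n) : Prop :=
  ∃ a b : Fin n → Bool, (∀ j, j ≠ i → a j = b j) ∧ f a ≠ f b

noncomputable def essArity {n : ℕ} (f : (Fin n → Bool) → Bool) : ℕ :=
  Nat.card {i : Fin n // Essential f i}

noncomputable def gapBF (f : BF) : ℕ :=
  sInf {d | ∃ g : BF, StrictMinor g f ∧ d = essArity f.2 - essArity g.2}

def fH {n : ℕ} (𝓔 : Finset (Finset (Fin n))) : (Fin n → Bool) → Bool :=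
  fun a => decide (Odd (𝓔.filter (fun E => ∀ i ∈ E, a i = true)).card)

def IsQuotientMap {n m : ℕ} (𝓔 : Finset (Finset (Fin n)))
    (𝓔' : Finset (Finset (Fin m))) (h : Fin m → Fin n) : Prop :=
  ∀ s : Finset (Fin n), s ∈ 𝓔 ↔ Odd (𝓔'.filter (fun t => t.image h = s)).card

abbrev HG := Σ n : ℕ, Finset (Finset (Fin n))

def HMinor (H H' : HG) : Prop := ∃ h : Fin H'.1 → Fin H.1, IsQuotientMap H.2 H'.2 h

def identEdges {n : ℕ} (𝓔 : Finset (Finset (Fin n))) (i j : Fin n) :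
    Finset (Finset (Fin n)) :=
  Finset.univ.filter (fun E => j ∉ E ∧
    ((i ∉ E ∧ E ∈ 𝓔) ∨
     (i ∈ E ∧ Odd ((if insert j E ∈ 𝓔 then 1 else 0) +
        (if E ∈ 𝓔 then 1 else 0) + (if insert j (E.erase i) ∈ 𝓔 then 1 else 0)))))

def EdgeIso {n : ℕ} (𝓔 𝓔' : Finset (Finset (Fin n))) : Prop :=
  ∃ φ : Fin n ≃ Fin n, ∀ s : Finset (Fin n), s.image φ ∈ 𝓔' ↔ s ∈ 𝓔

def IrreducibleBF (f : BF) : Prop :=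
  ∃ f' : BF, StrictMinor f' f ∧ ∀ g : BF, StrictMinor g f → Minor g f'

/-!
A Boolean function determines its hypergraph (uniqueness of the Zhegalkin polynomial): evaluating
at the indicator vector of `s` counts, modulo 2, the edges contained in `s`, and when `s` is a
minimal edge belonging to only one of two hypergraphs, these two counts differ by one. On the other
hand, substituting `a ∘ h` for the variables turns each edge `E` into its image `h(E)` and cancels
equal monomials in pairs. So `h` is a quotient map exactly when the substitution along `h` carries
`f_𝓗'` to `f_𝓗`.
-/

section OddImage

variable {α β : Type*} [DecidableEq β]

/-- The image of `S` under `f` modulo 2: the points with an odd number of preimages in `S`, that is,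
the support of the pushforward along `f` of the indicator function of `S` over the two-element
field. With `f = image h` and `S` an edge set, this is the quotient hypergraph along `h`. -/
def oddImage (f : α → β) (S : Finset α) : Finset β :=
  {y ∈ S.image f | Odd #{x ∈ S | f x = y}}

theorem mem_oddImage {f : α → β} {S : Finset α} {y : β} :
    y ∈ oddImage f S ↔ Odd #{x ∈ S | f x = y} := by
  refine mem_filter.trans (and_iff_right_of_imp fun hodd => ?_)
  obtain ⟨x, hx⟩ := card_pos.mp hodd.pos
  obtain ⟨hxS, rfl⟩ := mem_filter.mp hx
  exact mem_image_of_mem f hxS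

theorem odd_card_filter_oddImage (f : α → β) (S : Finset α) (p : β → Prop) [DecidablePred p] :
    Odd #{y ∈ oddImage f S | p y} ↔ Odd #{x ∈ S | p (f x)} := by
  have card_eq_sum_fibers :
      #{x ∈ S | p (f x)} = ∑ y ∈ S.image f with p y, #{x ∈ S | f x = y} := by
    rw [card_eq_sum_card_fiberwise (f := f) (t := {y ∈ S.image f | p y})]
    · refine sum_congr rfl fun y hy => ?_
      rw [filter_filter]
      congr 1
      refine filter_congr fun x _ => and_iff_right_of_imp ?_
      rintro rfl
      exact (mem_filter.mp hy).2
    · intro x hx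
      obtain ⟨hxS, hpx⟩ := mem_filter.mp hx
      exact mem_filter.mpr ⟨mem_image_of_mem f hxS, hpx⟩
  rw [card_eq_sum_fibers, odd_sum_iff_odd_card_odd, oddImage, filter_comm]

end OddImage

section LowerCount

variable {α : Type*} [PartialOrder α] [DecidableLE α]

theorem card_filter_le_eq_card_filter_lt_add [DecidableEq α] [DecidableLT α] (S : Finset α)
    (a : α) :
    #{x ∈ S | x ≤ a} = #{x ∈ S | x < a} + if a ∈ S then 1 else 0 := by
  simp_rw [le_iff_lt_or_eq, filter_or]
  rw [card_union_of_disjoint, filter_eq']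
  · split_ifs <;> simp
  · exact disjoint_filter.mpr fun x _ hlt => hlt.ne

theorem eq_of_forall_odd_card_filter_le_iff {S T : Finset α}
    (hparity : ∀ a, Odd #{x ∈ S | x ≤ a} ↔ Odd #{x ∈ T | x ≤ a}) : S = T := by
  classical
  by_contra hne
  obtain ⟨a, ha, hmin⟩ := (symmDiff S T).exists_minimal (symmDiff_nonempty.mpr hne)
  have mem_iff_of_lt {x : α} (hlt : x < a) : x ∈ S ↔ x ∈ T := by
    have hx : x ∉ symmDiff S T := fun hx => (hmin hx hlt.le).not_gt hlt
    rw [mem_symmDiff] at hx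
    tauto
  have lower_eq : {x ∈ S | x < a} = {x ∈ T | x < a} := by
    ext x
    simp only [mem_filter]
    exact and_congr_left mem_iff_of_lt
  have parity_at_a := hparity a
  rw [card_filter_le_eq_card_filter_lt_add, card_filter_le_eq_card_filter_lt_add,
    lower_eq] at parity_at_a
  rcases mem_symmDiff.mp ha with ⟨haS, haT⟩ | ⟨haT, haS⟩ <;>
    simp [haS, haT, Nat.odd_add_one, -Nat.not_odd_iff_even] at parity_at_a

end LowerCount

section EdgeFun

variable {V V' : Type*}

/-- The Boolean function `a ↦ ∑ E ∈ 𝓔, ∏ i ∈ E, a i` modulo 2 of a hypergraph with edge set `𝓔` on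
an arbitrary vertex type. As in `fH`, it is computed as the parity of the number of edges on which
`a` is constantly `true`. -/
def edgeFun (𝓔 : Finset (Finset V)) (a : V → Bool) : Bool :=
  decide (Odd #{E ∈ 𝓔 | ∀ i ∈ E, a i = true})

theorem fH_eq_edgeFun {n : ℕ} (𝓔 : Finset (Finset (Fin n))) : fH 𝓔 = edgeFun 𝓔 := by
  funext a
  -- The two sides decide `∀ i ∈ E, a i = true` by different instances.
  unfold fH edgeFun
  congr!

theorem edgeFun_indicator [DecidableEq V] (𝓔 : Finset (Finset V)) (s : Finset V) :
    edgeFun 𝓔 (fun i => decide (i ∈ s)) = decide (Odd #{E ∈ 𝓔 | E ⊆ s}) := by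
  simp only [edgeFun, decide_eq_true_eq, subset_iff]

theorem edgeFun_injective :
    Function.Injective (edgeFun : Finset (Finset V) → (V → Bool) → Bool) := by
  classical
  refine fun 𝓔 𝓕 hfun => eq_of_forall_odd_card_filter_le_iff fun s => ?_
  simpa only [edgeFun_indicator, decide_eq_decide] using congrFun hfun fun i => decide (i ∈ s)

theorem edgeFun_oddImage_image [DecidableEq V] (𝓔' : Finset (Finset V')) (h : V' → V)
    (a : V → Bool) :
    edgeFun (oddImage (image h) 𝓔') a = edgeFun 𝓔' (a ∘ h) := by
  simp only [edgeFun, odd_card_filter_oddImage, forall_mem_image, Function.comp_apply]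

theorem hypergraph_minor_iff_function_minor_general [DecidableEq V]
    (𝓔 : Finset (Finset V)) (𝓔' : Finset (Finset V')) (h : V' → V) :
    (∀ s : Finset V, s ∈ 𝓔 ↔ Odd #{t ∈ 𝓔' | t.image h = s}) ↔
      ∀ a : V → Bool, edgeFun 𝓔 a = edgeFun 𝓔' (a ∘ h) :=
  calc
    _ ↔ 𝓔 = oddImage (image h) 𝓔' := by simp only [Finset.ext_iff, mem_oddImage]
    _ ↔ edgeFun 𝓔 = edgeFun (oddImage (image h) 𝓔') := edgeFun_injective.eq_iff.symm
    _ ↔ _ := by simp only [funext_iff, edgeFun_oddImage_image]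

end EdgeFun

theorem hypergraph_minor_iff_function_minor (n m : ℕ)
    (𝓔 : Finset (Finset (Fin n))) (𝓔' : Finset (Finset (Fin m))) :
    HMinor ⟨n, 𝓔⟩ ⟨m, 𝓔'⟩ ↔ Minor ⟨n, fH 𝓔⟩ ⟨m, fH 𝓔'⟩ := by
  rw [fH_eq_edgeFun, fH_eq_edgeFun]
  exact exists_congr fun h => hypergraph_minor_iff_function_minor_general 𝓔 𝓔' h
end

section
/- A Boolean function f : {0,1}^n → {0,1} with at least two essential variables has arity gap two if and only if its Zhegalkin polynomial is, up to permutation of variables and addition of inessential variables, one of: x_1+...+x_m+c (m ≥ 2), x_1x_2+x_1+c, x_1x_2+x_1x_3+x_2x_3+c, or x_1x_2+x_1x_3+x_2x_3+x_1+x_2+c, for c ∈ {0,1}; otherwise its arity gap is one. -/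
open Finset

def cEdges {k : ℕ} (c : Bool) : Finset (Finset (Fin k)) := if c then {∅} else ∅

def gapE1 (m : ℕ) (c : Bool) : Finset (Finset (Fin m)) :=
  (Finset.univ.image fun i : Fin m => ({i} : Finset (Fin m))) ∪ cEdges c

def gapE2 (c : Bool) : Finset (Finset (Fin 2)) := {{0, 1}, {0}} ∪ cEdges c

def gapE3 (c : Bool) : Finset (Finset (Fin 3)) := {{0, 1}, {0, 2}, {1, 2}} ∪ cEdges c

def gapE4 (c : Bool) : Finset (Finset (Fin 3)) :=
  {{0, 1}, {0, 2}, {1, 2}, {0}, {1}} ∪ cEdges c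

/-!
Identifying `xᵢ` with `xⱼ` amounts to restricting `f` to the hyperplane `xᵢ = xⱼ`. If all variables
of `f` are essential, the gap exceeds one iff each of these restrictions loses, apart from the
variable that was identified away, either the merged variable or a third one.

If the merged variable is always lost, then `f` is invariant under flipping two equal coordinates;
with at least three variables a third coordinate makes it invariant under flipping any two, so `f`
is a parity up to a constant.

Otherwise choose `i`, `j` such that the set of third variables lost on `xᵢ = xⱼ` is nonempty and
as small as possible, and let `k` be in it. Every third variable `t ≠ j` lost on `xᵢ = xₖ` is also
lost on `xᵢ = xⱼ`, as `k` is, so by minimality either the merged variable or `xⱼ` is lost on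
`xᵢ = xₖ`. Likewise either the merged variable or `xᵢ` is lost on `xⱼ = xₖ`. Two of the four
combinations make a variable inessential; the other two say that `f` depends on `xᵢ, xⱼ, xₖ` only
through the majority of `xᵢ, xⱼ` and `xₖ` or its negation. A further variable `t` is then
impossible, since no second variable can be lost on `xᵢ = xₜ`.
-/

section Cube

variable {ι : Type*} [DecidableEq ι]

/-- The vertex of the Boolean cube adjacent to `a` in direction `i`. -/
def flipAt (i : ι) (a : ι → Bool) : ι → Bool := Function.update a i (!a i)

@[simp] theorem flipAt_self (i : ι) (a : ι → Bool) : flipAt i a i = !a i :=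
  Function.update_self ..

@[simp] theorem flipAt_of_ne {i j : ι} (h : j ≠ i) (a : ι → Bool) : flipAt i a j = a j :=
  Function.update_of_ne h ..

@[simp] theorem flipAt_flipAt (i : ι) (a : ι → Bool) : flipAt i (flipAt i a) = a := by
  simp [flipAt]

theorem flipAt_comm (i j : ι) (a : ι → Bool) :
    flipAt i (flipAt j a) = flipAt j (flipAt i a) := by
  obtain rfl | h := eq_or_ne i j
  · rfl
  · simp [flipAt, h, h.symm, Function.update_comm h]

theorem flipAt_update_of_ne {i k : ι} (h : k ≠ i) (a : ι → Bool) (v : Bool) :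
    flipAt k (Function.update a i v) = Function.update (flipAt k a) i v := by
  simp [flipAt, h, Function.update_comm h]

theorem eq_or_eq_flipAt_of_eqOn {a b : ι → Bool} {i : ι} (h : Set.EqOn a b {i}ᶜ) :
    b = a ∨ b = flipAt i a := by
  have hb : b = Function.update a i (b i) :=
    Function.eq_update_iff.2 ⟨rfl, fun j hj => (h hj).symm⟩
  obtain hi | hi := Bool.eq_or_eq_not (b i) (a i)
  · exact Or.inl (by rw [hb, hi, Function.update_eq_self])
  · exact Or.inr (by rw [hb, hi, flipAt])

theorem eqOn_flipAt (a : ι → Bool) (i : ι) : Set.EqOn a (flipAt i a) {i}ᶜ :=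
  fun _ hj => (flipAt_of_ne hj a).symm

end Cube

section Inessential

variable {ι β : Type*} [DecidableEq ι] {f : (ι → Bool) → β} {i j k t : ι}

/-- The variable `i` is inessential in `f`. -/
def Inessential (f : (ι → Bool) → β) (i : ι) : Prop := ∀ a, f (flipAt i a) = f a

/-- The variable `k` is inessential in the restriction of `f` to the hyperplane `xᵢ = xⱼ`; the
notion is meant for `k ∉ {i, j}`. -/
def InessentialOnDiag (f : (ι → Bool) → β) (i j k : ι) : Prop :=
  ∀ a, a i = a j → f (flipAt k a) = f a

/-- The common value of `xᵢ` and `xⱼ` is inessential in the restriction of `f` to the hyperplane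
`xᵢ = xⱼ`. -/
def MergedInessential (f : (ι → Bool) → β) (i j : ι) : Prop :=
  ∀ a, a i = a j → f (flipAt i (flipAt j a)) = f a

/-- The third variables lost when `i` and `j` are identified. -/
def thirdLost (f : (ι → Bool) → β) (i j : ι) : Set ι :=
  {k | k ≠ i ∧ k ≠ j ∧ InessentialOnDiag f i j k}

/-- Each identification of two variables makes yet another variable inessential. -/
def LosesTwo (f : (ι → Bool) → β) : Prop :=
  ∀ i j, i ≠ j → MergedInessential f i j ∨ (thirdLost f i j).Nonempty

theorem Inessential.apply_eq {a b : ι → Bool} (h : Inessential f i) (hab : Set.EqOn a b {i}ᶜ) :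
    f a = f b := by
  obtain rfl | rfl := eq_or_eq_flipAt_of_eqOn hab
  exacts [rfl, (h a).symm]

theorem InessentialOnDiag.apply_eq {a b : ι → Bool} (h : InessentialOnDiag f i j k)
    (ha : a i = a j) (hab : Set.EqOn a b {k}ᶜ) : f a = f b := by
  obtain rfl | rfl := eq_or_eq_flipAt_of_eqOn hab
  exacts [rfl, (h a ha).symm]

theorem dependsOn_of_inessential [Finite ι] {s : Set ι} (h : ∀ i ∉ s, Inessential f i) :
    DependsOn f s := by
  have := Fintype.ofFinite ι
  intro a b hab
  have key (S : Finset ι) : f (S.piecewise b a) = f a := by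
    induction S using Finset.induction_on with
    | empty => simp
    | insert i S hi ih =>
      rw [← ih, Finset.piecewise_insert]
      by_cases his : i ∈ s
      · rw [← hab i his, ← Finset.piecewise_eq_of_notMem S b a hi, Function.update_eq_self]
      · exact (h i his).apply_eq fun j hj => Function.update_of_ne hj ..
  simpa using (key Finset.univ).symm

theorem InessentialOnDiag.symm (h : InessentialOnDiag f i j k) : InessentialOnDiag f j i k :=
  fun a ha => h a ha.symm

theorem thirdLost_comm (f : (ι → Bool) → β) (i j : ι) : thirdLost f i j = thirdLost f j i := by
  ext k
  exact ⟨fun ⟨hi, hj, h⟩ => ⟨hj, hi, h.symm⟩, fun ⟨hj, hi, h⟩ => ⟨hi, hj, h.symm⟩⟩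

/-- The function obtained from `f` by negating the variable `k`. -/
def negVar (k : ι) (f : (ι → Bool) → β) : (ι → Bool) → β := fun a => f (flipAt k a)

@[simp] theorem negVar_negVar (k : ι) (f : (ι → Bool) → β) : negVar k (negVar k f) = f := by
  funext a
  simp [negVar]

theorem Inessential.negVar (h : Inessential f i) (k : ι) : Inessential (negVar k f) i :=
  fun a => by simp only [_root_.negVar, flipAt_comm k i, h _]

theorem inessential_negVar_iff : Inessential (negVar k f) i ↔ Inessential f i :=
  ⟨fun h => by simpa using h.negVar k, fun h => h.negVar k⟩

theorem InessentialOnDiag.negVar (h : InessentialOnDiag f i j t) (hki : k ≠ i) (hkj : k ≠ j) :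
    InessentialOnDiag (negVar k f) i j t := fun a ha => by
  rw [_root_.negVar, flipAt_comm, h _ (by simpa [hki.symm, hkj.symm] using ha), _root_.negVar]

theorem MergedInessential.negVar (h : MergedInessential f i j) (hki : k ≠ i) (hkj : k ≠ j) :
    MergedInessential (negVar k f) i j := fun a ha => by
  rw [_root_.negVar, flipAt_comm k, flipAt_comm k,
    h _ (by simpa [hki.symm, hkj.symm] using ha), _root_.negVar]

end Inessential

section Parity

variable {ι : Type*} [DecidableEq ι] {f : (ι → Bool) → Bool}

/-- The sum of the coordinates of `a` modulo two. -/
def parity [Fintype ι] (a : ι → Bool) : Bool := decide (Odd #{i | a i = true})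

theorem parity_flipAt [Fintype ι] (i : ι) (a : ι → Bool) : parity (flipAt i a) = !parity a := by
  wlog ha : a i = false generalizing a
  · rw [← Bool.not_not (parity (flipAt i a)), ← this (flipAt i a) (by simpa using ha),
      flipAt_flipAt]
  have hinsert : Finset.univ.filter (flipAt i a · = true) =
      insert i (Finset.univ.filter (a · = true)) := by
    ext x
    obtain rfl | hx := eq_or_ne x i <;> simp [*]
  rw [parity, parity, hinsert, Finset.card_insert_of_notMem (by simp [ha]), ← decide_not]
  exact decide_eq_decide.2 Nat.odd_add_one

theorem eq_parity_of_apply_flipAt [Fintype ι] (h : ∀ i a, f (flipAt i a) = !f a)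
    (a : ι → Bool) : f a = (parity a ^^ f fun _ => false) := by
  have hconst : DependsOn (fun a => f a ^^ parity a) ∅ :=
    dependsOn_of_inessential fun i _ a => by simp only [h, parity_flipAt, Bool.not_xor_not]
  have hzero : (f a ^^ parity a) = f fun _ => false := by
    simpa [parity] using hconst.empty a fun _ => false
  rw [← hzero, Bool.xor_left_comm, Bool.xor_self, Bool.xor_false]

theorem apply_flipAt_flipAt_of_mergedInessential {β : Type*} {f : (ι → Bool) → β} {i j k : ι}
    (h : ∀ i j, i ≠ j → MergedInessential f i j) (hij : i ≠ j) (hki : k ≠ i) (hkj : k ≠ j)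
    (a : ι → Bool) : f (flipAt i (flipAt j a)) = f a := by
  by_cases ha : a i = a j
  · exact h i j hij a ha
  wlog hk : a k = a i generalizing i j
  · rw [flipAt_comm]
    exact this hij.symm hkj hki (Ne.symm ha)
      ((Bool.eq_not.2 hk).trans (Bool.eq_not.2 (Ne.symm ha)).symm)
  -- flip `i` together with `k`, then `k` back together with `j`
  have hkj' : flipAt k (flipAt i a) k = flipAt k (flipAt i a) j := by
    simpa [hki, hij.symm, hkj.symm, hk] using (Bool.eq_not.2 (Ne.symm ha)).symm
  calc f (flipAt i (flipAt j a))
      = f (flipAt k (flipAt j (flipAt k (flipAt i a)))) := by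
        rw [flipAt_comm j k, flipAt_flipAt, flipAt_comm]
    _ = f (flipAt k (flipAt i a)) := h k j hkj _ hkj'
    _ = f a := h k i hki a hk

theorem apply_flipAt_eq_not_of_invariant [Finite ι] (hess : ∃ i, ¬ Inessential f i)
    (h : ∀ i j, i ≠ j → ∀ a, f (flipAt i (flipAt j a)) = f a) (i : ι) (a : ι → Bool) :
    f (flipAt i a) = !f a := by
  have hdir (i j : ι) (a : ι → Bool) : f (flipAt i a) = f (flipAt j a) := by
    obtain rfl | hij := eq_or_ne i j
    · rfl
    · rw [← h j i hij.symm, flipAt_flipAt]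
  obtain ⟨i₀, hi₀⟩ := hess
  have hconst : DependsOn (fun a => f (flipAt i₀ a) ^^ f a) ∅ :=
    dependsOn_of_inessential fun j _ a => by
      rw [hdir i₀ j (flipAt j a), flipAt_flipAt, hdir j i₀ a, Bool.xor_comm]
  simp only [Inessential, not_forall] at hi₀
  obtain ⟨b, hb⟩ := hi₀
  have hab : (f (flipAt i₀ a) ^^ f a) = true :=
    (hconst.empty a b).trans (by simpa using hb)
  rw [hdir i i₀]
  exact Bool.eq_not.2 (by simpa using hab)

theorem eq_parity_of_mergedInessential [Fintype ι] (hcard : 3 ≤ Fintype.card ι)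
    (hess : ∃ i, ¬ Inessential f i) (h : ∀ i j, i ≠ j → MergedInessential f i j)
    (a : ι → Bool) : f a = (parity a ^^ f fun _ => false) := by
  refine eq_parity_of_apply_flipAt (apply_flipAt_eq_not_of_invariant hess fun i j hij => ?_) a
  obtain ⟨k, -, hk⟩ := Finset.exists_mem_notMem_of_card_lt_card (s := {i, j}) (t := Finset.univ)
    ((Finset.card_le_two).trans_lt (by rw [Finset.card_univ]; exact hcard))
  simp only [Finset.mem_insert, Finset.mem_singleton, not_or] at hk
  exact apply_flipAt_flipAt_of_mergedInessential h hij hk.1 hk.2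

end Parity

section Majority

variable {ι β : Type*} {f : (ι → Bool) → β} {i j k t w : ι}

/-- The majority of three bits. -/
def majority (x y z : Bool) : Bool := (x && y) || (x && z) || (y && z)

theorem majority_self_left (x y : Bool) : majority x x y = x := by cases x <;> cases y <;> rfl

theorem majority_right_comm : ∀ x y z, majority x y z = majority x z y := by decide

/-- On every subcube spanned by the directions `i`, `j`, `k`, the value of `f` is determined by the
majority of these three coordinates. -/
def FactorsThroughMajority (f : (ι → Bool) → β) (i j k : ι) : Prop :=
  ∀ a b, Set.EqOn a b {i, j, k}ᶜ →
    majority (a i) (a j) (a k) = majority (b i) (b j) (b k) → f a = f b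

theorem FactorsThroughMajority.right_comm (h : FactorsThroughMajority f i j k) :
    FactorsThroughMajority f i k j := fun a b hab hmaj =>
  h a b (by rwa [Set.pair_comm]) (by rwa [majority_right_comm, majority_right_comm (b i)])

theorem exists_eqOn_compl_apply_eq (hij : i ≠ j) (hik : i ≠ k) (hjk : j ≠ k) (a : ι → Bool)
    (x y z : Bool) :
    ∃ b : ι → Bool, Set.EqOn b a {i, j, k}ᶜ ∧ b i = x ∧ b j = y ∧ b k = z := by
  classical
  refine ⟨Function.update (Function.update (Function.update a i x) j y) k z, fun w hw => ?_, ?_⟩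
  · simp only [Set.mem_compl_iff, Set.mem_insert_iff, Set.mem_singleton_iff, not_or] at hw
    simp [hw]
  · simp [*]

variable [DecidableEq ι]

theorem factorsThroughMajority_of_inessentialOnDiag (hij : InessentialOnDiag f i j k)
    (hik : InessentialOnDiag f i k j) (hjk : InessentialOnDiag f j k i) :
    FactorsThroughMajority f i j k := by
  classical
  let reset (a : ι → Bool) : ι → Bool :=
    ({i, j, k} : Set ι).piecewise (fun _ => majority (a i) (a j) (a k)) a
  -- two of the three coordinates agree with the majority, so the third may be reset to it
  have hreset (a : ι → Bool) : f a = f (reset a) := by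
    obtain h | h | h : a i = a j ∨ a i = a k ∨ a j = a k := by
      cases a i <;> cases a j <;> cases a k <;> simp
    · refine hij.apply_eq h fun x hx => ?_
      simp only [reset, Set.piecewise]
      grind [majority]
    · refine hik.apply_eq h fun x hx => ?_
      simp only [reset, Set.piecewise]
      grind [majority]
    · refine hjk.apply_eq h fun x hx => ?_
      simp only [reset, Set.piecewise]
      grind [majority]
  intro a b hab hmaj
  have : reset a = reset b := by
    funext x
    by_cases hx : x ∈ ({i, j, k} : Set ι)
    · simp only [reset, Set.piecewise_eq_of_mem _ _ _ hx, hmaj]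
    · simp only [reset, Set.piecewise_eq_of_notMem _ _ _ hx, hab hx]
  rw [hreset a, hreset b, this]

theorem FactorsThroughMajority.inessential_of_forall_exists (h : FactorsThroughMajority f i j k)
    (hab : ∀ a, ∃ b c, Set.EqOn b a {i, j, k}ᶜ ∧ Set.EqOn c a {i, j, k}ᶜ ∧
      majority (b i) (b j) (b k) ≠ majority (c i) (c j) (c k) ∧ f b = f c) :
    Inessential f i := by
  intro a
  obtain ⟨b, c, hb, hc, hmaj, hbc⟩ := hab a
  have heq (a' : ι → Bool) (ha' : Set.EqOn a a' {i, j, k}ᶜ) : f a' = f b := by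
    by_cases hm : majority (a' i) (a' j) (a' k) = majority (b i) (b j) (b k)
    · exact h _ _ (hb.trans ha').symm hm
    · rw [hbc]
      exact h _ _ (hc.trans ha').symm ((Bool.eq_not.2 hm).trans (Bool.eq_not.2 hmaj.symm).symm)
  rw [heq a (Set.eqOn_refl ..), heq _ ((eqOn_flipAt a i).mono (by simp))]

theorem FactorsThroughMajority.inessential_of_inessentialOnDiag_middle
    (h : FactorsThroughMajority f i j k) (hij : i ≠ j) (hik : i ≠ k) (hjk : j ≠ k)
    (ht : t ∉ ({i, j, k} : Set ι)) (hd : InessentialOnDiag f i t j) : Inessential f i := by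
  refine h.inessential_of_forall_exists fun a => ?_
  obtain ⟨b, hba, hbi, hbj, hbk⟩ := exists_eqOn_compl_apply_eq hij hik hjk a (a t) (a t) (!a t)
  refine ⟨b, flipAt j b, hba, ((eqOn_flipAt b j).mono (by simp)).symm.trans hba, ?_,
    (hd b (by rw [hbi, hba ht])).symm⟩
  simp only [flipAt_self, flipAt_of_ne, hij, hjk.symm, hbi, hbj, hbk, ne_eq, not_false_eq_true]
  cases a t <;> decide

theorem FactorsThroughMajority.inessential_of_mergedInessential
    (h : FactorsThroughMajority f i j k) (hij : i ≠ j) (hik : i ≠ k) (hjk : j ≠ k)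
    (ht : t ∉ ({i, j, k} : Set ι)) (hm : MergedInessential f i t) : Inessential f i := by
  refine h.inessential_of_forall_exists fun a => ?_
  obtain ⟨b, hba, hbi, hbj, hbk⟩ := exists_eqOn_compl_apply_eq hij hik hjk a (a t) (a t) (!a t)
  obtain ⟨c, hca, hci, hcj, hck⟩ := exists_eqOn_compl_apply_eq hij hik hjk a (a t) (!a t) (!a t)
  have hti : t ≠ i := fun h => ht (by simp [h])
  have htj : j ≠ t := fun h => ht (by simp [h])
  have htk : k ≠ t := fun h => ht (by simp [h])
  refine ⟨b, c, hba, hca, ?_, ?_⟩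
  · rw [hbi, hbj, hbk, hci, hcj, hck]
    cases a t <;> decide
  -- flipping `i` and `t` turns both points into points of majority `!a t`
  rw [← hm b (by rw [hbi, hba ht]), ← hm c (by rw [hci, hca ht])]
  refine h _ _ (fun x hx => ?_) ?_
  · simp only [flipAt, Function.update_apply, hba hx, hca hx, hba ht, hca ht]
    grind
  · simp only [flipAt_self, flipAt_of_ne, hij.symm, hik.symm, hti.symm, htj, htk, hbi, hbj, hbk,
      hci, hcj, hck, ne_eq, not_false_eq_true]
    cases a t <;> decide

theorem FactorsThroughMajority.inessential_of_inessentialOnDiag_notMem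
    (h : FactorsThroughMajority f i j k) (hij : i ≠ j) (hik : i ≠ k) (hjk : j ≠ k)
    (ht : t ∉ ({i, j, k} : Set ι)) (hw : w ∉ ({i, j, k} : Set ι))
    (hd : InessentialOnDiag f i t w) : Inessential f w := by
  intro a
  obtain ⟨b, hba, hbi, hbj, hbk⟩ := exists_eqOn_compl_apply_eq hij hik hjk a (a t)
    (majority (a i) (a j) (a k)) (majority (a i) (a j) (a k))
  have hmaj : majority (a i) (a j) (a k) = majority (b i) (b j) (b k) := by
    rw [hbi, hbj, hbk]
    cases majority (a i) (a j) (a k) <;> cases a t <;> rfl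
  have hwi : i ≠ w := fun h => hw (by simp [h])
  have hwj : j ≠ w := fun h => hw (by simp [h])
  have hwk : k ≠ w := fun h => hw (by simp [h])
  calc f (flipAt w a) = f (flipAt w b) := by
        refine h _ _ (fun x hx => ?_) ?_
        · simp only [flipAt, Function.update_apply, hba hx, hba hw]
        · simpa only [flipAt_of_ne, hwi, hwj, hwk, ne_eq, not_false_eq_true] using hmaj
    _ = f b := hd b (by rw [hbi, hba ht])
    _ = f a := (h _ _ hba.symm hmaj).symm

theorem FactorsThroughMajority.mem_of_forall_not_inessential
    (h : FactorsThroughMajority f i j k) (hij : i ≠ j) (hik : i ≠ k) (hjk : j ≠ k)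
    (hess : ∀ t, ¬ Inessential f t)
    (hl : ∀ t ∉ ({i, j, k} : Set ι), MergedInessential f i t ∨ (thirdLost f i t).Nonempty) (t : ι) :
    t ∈ ({i, j, k} : Set ι) := by
  by_contra ht
  obtain hm | ⟨w, hwi, -, hd⟩ := hl t ht
  · exact hess i (h.inessential_of_mergedInessential hij hik hjk ht hm)
  by_cases hw : w ∈ ({i, j, k} : Set ι)
  · obtain rfl | rfl | rfl := hw
    · exact hwi rfl
    · exact hess i (h.inessential_of_inessentialOnDiag_middle hij hik hjk ht hd)
    · exact hess i (h.right_comm.inessential_of_inessentialOnDiag_middle hik hij hjk.symm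
        (by rwa [Set.pair_comm]) hd)
  · exact hess w (h.inessential_of_inessentialOnDiag_notMem hij hik hjk ht hw hd)

theorem FactorsThroughMajority.eq_majority_xor {f : (ι → Bool) → Bool}
    (h : FactorsThroughMajority f i j k) (hmem : ∀ t, t ∈ ({i, j, k} : Set ι))
    (hess : ¬ Inessential f i) (a : ι → Bool) :
    f a = (majority (a i) (a j) (a k) ^^ f fun _ => false) := by
  have hconst (a : ι → Bool) : f a = f fun _ => majority (a i) (a j) (a k) :=
    h _ _ (fun t ht => absurd (hmem t) ht) (majority_self_left ..).symm
  have hne : f (fun _ => true) = !f fun _ => false := by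
    refine Bool.eq_not.2 fun heq => hess fun a => ?_
    have key (x : Bool) : f (fun _ => x) = f fun _ => false := by cases x <;> simp [heq]
    exact (hconst _).trans ((key _).trans ((hconst a).trans (key _)).symm)
  rw [hconst a]
  cases majority (a i) (a j) (a k)
  · exact (Bool.false_xor _).symm
  · exact hne.trans (Bool.true_xor _).symm

end Majority

section Extremal

variable {ι β : Type*} [DecidableEq ι] {f : (ι → Bool) → β} {i j k t : ι}

theorem mem_thirdLost_of_mem_thirdLost (hk : k ∈ thirdLost f i j) (ht : t ∈ thirdLost f i k)
    (htj : t ≠ j) : t ∈ thirdLost f i j := by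
  obtain ⟨hki, -, hk⟩ := hk
  obtain ⟨hti, -, ht⟩ := ht
  refine ⟨hti, htj, fun a ha => ?_⟩
  by_cases hak : a i = a k
  · exact ht a hak
  -- move to `xᵢ = xₖ` by flipping the lost variable `k`
  have hflip : flipAt k a i = flipAt k a k := by simpa [hki.symm] using Bool.eq_not.2 hak
  calc f (flipAt t a) = f (flipAt k (flipAt t a)) :=
        (hk _ (by simpa [hti.symm, htj.symm] using ha)).symm
    _ = f (flipAt t (flipAt k a)) := by rw [flipAt_comm]
    _ = f (flipAt k a) := ht _ hflip
    _ = f a := hk a ha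

theorem mem_thirdLost_of_minimal [Finite ι] (hk : k ∈ thirdLost f i j)
    (hmin : ∀ i' j', i' ≠ j' → (thirdLost f i' j').Nonempty →
      (thirdLost f i j).ncard ≤ (thirdLost f i' j').ncard)
    (hne : (thirdLost f i k).Nonempty) : j ∈ thirdLost f i k := by
  by_contra hj
  have hsub : thirdLost f i k ⊂ thirdLost f i j := by
    refine ⟨fun t ht => mem_thirdLost_of_mem_thirdLost hk ht (by rintro rfl; exact hj ht),
      fun hsup => ?_⟩
    exact (hsup hk).2.1 rfl
  exact (Set.ncard_lt_ncard hsub).not_ge (hmin i k hk.1.symm hne)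

theorem inessential_of_inessentialOnDiag_of_mergedInessential (hij : i ≠ j) (hki : k ≠ i)
    (hk : InessentialOnDiag f i j k) (hi : InessentialOnDiag f j k i)
    (hm : MergedInessential f i k) : Inessential f i := by
  intro a
  by_cases hjk : a j = a k
  · exact hi a hjk
  wlog hai : a i = a j generalizing a
  · simpa using (this (flipAt i a) (by simpa [hij.symm, hki] using hjk)
      (by simpa [hij.symm] using (Bool.eq_not.2 (Ne.symm hai)).symm)).symm
  have hflip : flipAt i a i = flipAt i a k := by
    simpa [hki, hai] using (Bool.eq_not.2 (Ne.symm hjk)).symm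
  calc f (flipAt i a) = f (flipAt i (flipAt k (flipAt i a))) := (hm _ hflip).symm
    _ = f (flipAt k a) := by rw [flipAt_comm k, flipAt_flipAt]
    _ = f a := hk a hai

theorem inessentialOnDiag_negVar (hij : i ≠ j) (hkj : k ≠ j) (hk : InessentialOnDiag f i j k)
    (hm : MergedInessential f j k) : InessentialOnDiag (negVar k f) i k j := by
  intro a hik
  wlog hji : a i = a j generalizing a
  · simpa using (this (flipAt j a) (by simpa [hij, hkj] using hik)
      (by simpa [hij] using Bool.eq_not.2 hji)).symm
  calc f (flipAt k (flipAt j a)) = f (flipAt j (flipAt k a)) := by rw [flipAt_comm]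
    _ = f a := hm a (hji.symm.trans hik)
    _ = f (flipAt k a) := (hk a hji).symm

theorem factorsThroughMajority_negVar (hij : i ≠ j) (hki : k ≠ i) (hkj : k ≠ j)
    (hk : InessentialOnDiag f i j k) (hi : MergedInessential f i k) (hj : MergedInessential f j k) :
    FactorsThroughMajority (negVar k f) i j k :=
  factorsThroughMajority_of_inessentialOnDiag (fun a ha => by simpa [negVar] using (hk a ha).symm)
    (inessentialOnDiag_negVar hij hkj hk hj) (inessentialOnDiag_negVar hij.symm hki hk.symm hi)

theorem exists_factorsThroughMajority [Finite ι] (hess : ∀ t, ¬ Inessential f t) (h : LosesTwo f)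
    (hne : ∃ i j, i ≠ j ∧ (thirdLost f i j).Nonempty) :
    ∃ i j k, i ≠ j ∧ k ≠ i ∧ k ≠ j ∧
      (FactorsThroughMajority f i j k ∨ FactorsThroughMajority (negVar k f) i j k) := by
  obtain ⟨i, j, hij, k, hk, hmin⟩ : ∃ i j, i ≠ j ∧ ∃ k ∈ thirdLost f i j, ∀ i' j', i' ≠ j' →
      (thirdLost f i' j').Nonempty → (thirdLost f i j).ncard ≤ (thirdLost f i' j').ncard := by
    obtain ⟨⟨i, j⟩, ⟨hij, k, hk⟩, hmin⟩ :=
      Set.exists_min_image {p : ι × ι | p.1 ≠ p.2 ∧ (thirdLost f p.1 p.2).Nonempty}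
        (fun p => (thirdLost f p.1 p.2).ncard) (Set.toFinite _)
        (let ⟨i, j, h⟩ := hne; ⟨(i, j), h⟩)
    exact ⟨i, j, hij, k, hk, fun i' j' hij' hne' => hmin (i', j') ⟨hij', hne'⟩⟩
  have hik : MergedInessential f i k ∨ InessentialOnDiag f i k j :=
    (h i k hk.1.symm).imp_right fun hne => (mem_thirdLost_of_minimal hk hmin hne).2.2
  have hjk : MergedInessential f j k ∨ InessentialOnDiag f j k i :=
    (h j k hk.2.1.symm).imp_right fun hne => (mem_thirdLost_of_minimal
      (thirdLost_comm f i j ▸ hk) (thirdLost_comm f i j ▸ hmin) hne).2.2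
  obtain ⟨hki, hkj, hk⟩ := hk
  refine ⟨i, j, k, hij, hki, hkj, ?_⟩
  rcases hik with hik | hik <;> rcases hjk with hjk | hjk
  · exact Or.inr (factorsThroughMajority_negVar hij hki hkj hk hik hjk)
  · exact absurd (inessential_of_inessentialOnDiag_of_mergedInessential hij hki hk hjk hik)
      (hess i)
  · exact absurd (inessential_of_inessentialOnDiag_of_mergedInessential hij.symm hkj hk.symm hik
      hjk) (hess j)
  · exact Or.inl (factorsThroughMajority_of_inessentialOnDiag hk hik hjk)

theorem exists_eq_majority_of_losesTwo [Finite ι] {f : (ι → Bool) → Bool}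
    (hess : ∀ t, ¬ Inessential f t) (h : LosesTwo f)
    (hne : ∃ i j, i ≠ j ∧ (thirdLost f i j).Nonempty) :
    ∃ i j k, i ≠ j ∧ k ≠ i ∧ k ≠ j ∧ (∀ t, t = i ∨ t = j ∨ t = k) ∧ ∃ c,
      (∀ a, f a = (majority (a i) (a j) (a k) ^^ c)) ∨
      ∀ a, f a = (majority (a i) (a j) (!a k) ^^ c) := by
  obtain ⟨i, j, k, hij, hki, hkj, hmaj | hmaj⟩ := exists_factorsThroughMajority hess h hne
  · have hmem := hmaj.mem_of_forall_not_inessential hij hki.symm hkj.symm hess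
      fun t ht => h i t fun hti => ht (Or.inl hti.symm)
    exact ⟨i, j, k, hij, hki, hkj, hmem, _, Or.inl (hmaj.eq_majority_xor hmem (hess i))⟩
  · have hess' (t : ι) : ¬ Inessential (negVar k f) t := inessential_negVar_iff.not.2 (hess t)
    have hmem := hmaj.mem_of_forall_not_inessential hij hki.symm hkj.symm hess' fun t ht => by
      simp only [Set.mem_insert_iff, Set.mem_singleton_iff, not_or] at ht
      exact (h i t (Ne.symm ht.1)).imp (fun hm => hm.negVar hki (Ne.symm ht.2.2))
        fun ⟨w, hwi, hwt, hw⟩ => ⟨w, hwi, hwt, hw.negVar hki (Ne.symm ht.2.2)⟩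
    refine ⟨i, j, k, hij, hki, hkj, hmem, negVar k f fun _ => false, Or.inr fun a => ?_⟩
    have := hmaj.eq_majority_xor hmem (hess' i) (flipAt k a)
    rwa [flipAt_of_ne hki.symm, flipAt_of_ne hkj.symm, flipAt_self, negVar, flipAt_flipAt] at this

end Extremal

section Identification

variable {ι β : Type*} [DecidableEq ι] {f : (ι → Bool) → β} {i j k : ι}

/-- The identification minor of `f` obtained by substituting `xⱼ` for `xᵢ`. -/
def ident (f : (ι → Bool) → β) (i j : ι) : (ι → Bool) → β :=
  fun a => f (Function.update a i (a j))

theorem ident_flipAt_of_ne (hki : k ≠ i) (hkj : k ≠ j) (a : ι → Bool) :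
    ident f i j (flipAt k a) = f (flipAt k (Function.update a i (a j))) := by
  rw [ident, flipAt_of_ne hkj.symm, flipAt_update_of_ne hki]

theorem ident_flipAt_right (hij : i ≠ j) (a : ι → Bool) :
    ident f i j (flipAt j a) = f (flipAt i (flipAt j (Function.update a i (a j)))) := by
  rw [ident, flipAt_self, flipAt_update_of_ne hij.symm, flipAt.eq_def i, Function.update_self,
    Function.update_idem]

theorem ident_of_eq {a : ι → Bool} (h : a i = a j) : ident f i j a = f a := by
  rw [ident, ← h, Function.update_eq_self]

theorem inessential_ident_self (hij : i ≠ j) : Inessential (ident f i j) i := fun a => by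
  simp [ident, flipAt, hij.symm]

theorem inessential_ident_iff (hij : i ≠ j) (hki : k ≠ i) (hkj : k ≠ j) :
    Inessential (ident f i j) k ↔ InessentialOnDiag f i j k := by
  refine ⟨fun h a ha => ?_, fun h a => ?_⟩
  · rw [← ident_of_eq (f := f) ha, ← h a, ident_flipAt_of_ne hki hkj, ← ha,
      Function.update_eq_self]
  · rw [ident_flipAt_of_ne hki hkj, h _ (by simp [hij.symm]), ident]

theorem inessential_ident_right_iff (hij : i ≠ j) :
    Inessential (ident f i j) j ↔ MergedInessential f i j := by
  refine ⟨fun h a ha => ?_, fun h a => ?_⟩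
  · rw [← ident_of_eq (f := f) ha, ← h a, ident_flipAt_right hij, ← ha, Function.update_eq_self]
  · rw [ident_flipAt_right hij, h _ (by simp [hij.symm]), ident]

theorem losesTwo_iff :
    LosesTwo f ↔ ∀ i j, i ≠ j → ∃ k, k ≠ i ∧ Inessential (ident f i j) k := by
  refine forall₃_congr fun i j hij => ⟨?_, ?_⟩
  · rintro (h | ⟨k, hki, hkj, h⟩)
    · exact ⟨j, hij.symm, (inessential_ident_right_iff hij).2 h⟩
    · exact ⟨k, hki, (inessential_ident_iff hij hki hkj).2 h⟩
  · rintro ⟨k, hki, h⟩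
    obtain rfl | hkj := eq_or_ne k j
    · exact Or.inl ((inessential_ident_right_iff hij).1 h)
    · exact Or.inr ⟨k, hki, hkj, (inessential_ident_iff hij hki hkj).1 h⟩

end Identification

section Minor

theorem Minor.trans {f g h : BF} (hfg : Minor f g) (hgh : Minor g h) : Minor f h := by
  obtain ⟨σ, hσ⟩ := hfg
  obtain ⟨τ, hτ⟩ := hgh
  exact ⟨σ ∘ τ, fun a => by rw [hσ, hτ, Function.comp_assoc]⟩

theorem EquivBF.trans {f g h : BF} (hfg : EquivBF f g) (hgh : EquivBF g h) : EquivBF f h :=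
  ⟨hfg.1.trans hgh.1, hgh.2.trans hfg.2⟩

variable {m n : ℕ} {f : (Fin m → Bool) → Bool} {g : (Fin n → Bool) → Bool} {σ : Fin m → Fin n}

theorem minor_of_injective [Nonempty (Fin m)] (h : ∀ a, g a = f (a ∘ σ))
    (hσ : Function.Injective σ) : Minor ⟨m, f⟩ ⟨n, g⟩ :=
  ⟨Function.invFun σ, fun a => by
    change f a = g _
    rw [h, Function.comp_assoc, Function.invFun_comp hσ, Function.comp_id]⟩

theorem equivBF_of_bijective (h : ∀ a, g a = f (a ∘ σ)) (hσ : Function.Bijective σ) :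
    EquivBF ⟨n, g⟩ ⟨m, f⟩ := by
  obtain ⟨τ, hτσ, -⟩ := Function.bijective_iff_has_inverse.1 hσ
  refine ⟨⟨σ, h⟩, τ, fun a => ?_⟩
  change f a = g _
  rw [h, Function.comp_assoc, hτσ.comp_eq_id, Function.comp_id]

theorem ident_minor (f : (Fin m → Bool) → Bool) (i j : Fin m) :
    Minor ⟨m, ident f i j⟩ ⟨m, f⟩ :=
  ⟨Function.update id i j, fun a => by simp only [ident, Function.comp_update, Function.comp_id]⟩

theorem StrictMinor.exists_minor_ident [Nonempty (Fin m)] (h : StrictMinor ⟨n, g⟩ ⟨m, f⟩) :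
    ∃ i j, i ≠ j ∧ Minor ⟨n, g⟩ ⟨m, ident f i j⟩ := by
  obtain ⟨⟨σ, hσ⟩, hnot⟩ := h
  obtain ⟨i, j, hij, hne⟩ := Function.not_injective_iff.1 fun hi => hnot (minor_of_injective hσ hi)
  have hident (a : Fin n → Bool) : ident f i j (a ∘ σ) = f (a ∘ σ) := ident_of_eq (congrArg a hij)
  exact ⟨i, j, hne, σ, fun a => (hσ a).trans (hident a).symm⟩

end Minor

section EssentialArity

variable {m n : ℕ} {f : (Fin n → Bool) → Bool}

theorem not_essential_iff {i : Fin n} : ¬ Essential f i ↔ Inessential f i := by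
  simp only [Essential, not_exists, not_and, not_not]
  exact ⟨fun h a => h _ _ fun j hj => flipAt_of_ne hj a, fun h a b hab => h.apply_eq hab⟩

theorem dependsOn_essential (f : (Fin n → Bool) → Bool) : DependsOn f {i | Essential f i} :=
  dependsOn_of_inessential fun _ hi => not_essential_iff.1 hi

theorem essArity_add_card_le {S : Finset (Fin n)} (h : ∀ i ∈ S, Inessential f i) :
    essArity f + #S ≤ n := by
  have hsub : {i | Essential f i} ⊆ (↑Sᶜ : Set (Fin n)) := fun i hi => by
    simpa using fun hiS => not_essential_iff.2 (h i hiS) hi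
  calc essArity f + #S ≤ #Sᶜ + #S := by
        gcongr
        exact (Set.ncard_le_ncard hsub).trans_eq (Set.ncard_coe_finset _)
    _ = n := by rw [Finset.card_compl_add_card, Fintype.card_fin]

theorem le_essArity_add_card {S : Finset (Fin n)} (h : ∀ i ∉ S, Essential f i) :
    n ≤ essArity f + #S := by
  have hsub : (↑Sᶜ : Set (Fin n)) ⊆ {i | Essential f i} := fun i hi => h i (by simpa using hi)
  calc n = #Sᶜ + #S := by rw [Finset.card_compl_add_card, Fintype.card_fin]
    _ ≤ essArity f + #S := by
        gcongr
        exact (Set.ncard_coe_finset _).symm.trans_le (Set.ncard_le_ncard hsub)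

theorem essArity_eq_of_forall_essential (h : ∀ i, Essential f i) : essArity f = n :=
  le_antisymm (essArity_add_card_le (S := ∅) (by simp))
    (le_essArity_add_card (S := ∅) fun i _ => h i)

theorem Essential.exists_of_forall_eq_comp {g : (Fin m → Bool) → Bool} {σ : Fin n → Fin m}
    {j : Fin m} (hj : Essential g j) (h : ∀ a, g a = f (a ∘ σ)) :
    ∃ i, Essential f i ∧ σ i = j := by
  obtain ⟨a, b, hab, hne⟩ := hj
  by_contra! hcon
  exact hne (by rw [h, h]; exact dependsOn_essential f fun i hi => hab _ (hcon i hi))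

theorem Minor.essArity_le {f g : BF} (h : Minor g f) : essArity g.2 ≤ essArity f.2 := by
  obtain ⟨σ, hσ⟩ := h
  calc essArity g.2 ≤ (σ '' {i | Essential f.2 i}).ncard :=
        Set.ncard_le_ncard fun _ hj => Essential.exists_of_forall_eq_comp hj hσ
    _ ≤ essArity f.2 := Set.ncard_image_le

theorem EquivBF.essArity_eq {f g : BF} (h : EquivBF f g) : essArity f.2 = essArity g.2 :=
  le_antisymm h.1.essArity_le h.2.essArity_le

theorem EquivBF.gapBF_eq {f g : BF} (h : EquivBF f g) : gapBF f = gapBF g := by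
  have hstrict (k : BF) : StrictMinor k f ↔ StrictMinor k g :=
    and_congr ⟨fun hk => hk.trans h.1, fun hk => hk.trans h.2⟩
      (not_congr ⟨h.2.trans, h.1.trans⟩)
  simp only [gapBF, hstrict, h.essArity_eq]

theorem exists_equivBF_forall_essential (f : BF) (hpos : 0 < essArity f.2) :
    ∃ g : BF, EquivBF f g ∧ ∀ i, Essential g.2 i := by
  obtain ⟨n, f⟩ := f
  let e : {i // Essential f i} ≃ Fin (essArity f) := Finite.equivFin _
  let σ : Fin (essArity f) → Fin n := fun j => e.symm j
  classical
  let τ : Fin n → Fin (essArity f) := fun i => if h : Essential f i then e ⟨i, h⟩ else ⟨0, hpos⟩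
  have hτσ (i : Fin n) (hi : Essential f i) : σ (τ i) = i := by simp [σ, τ, hi]
  have hf (a : Fin n → Bool) : f a = f ((a ∘ σ) ∘ τ) :=
    dependsOn_essential f fun i hi => (congrArg a (hτσ i hi)).symm
  refine ⟨⟨essArity f, fun a => f (a ∘ τ)⟩, ⟨⟨σ, hf⟩, ⟨τ, fun a => rfl⟩⟩, fun j => ?_⟩
  obtain ⟨i, hi, hij⟩ := (e.symm j).2.exists_of_forall_eq_comp (f := fun a => f (a ∘ τ)) hf
  exact e.symm.injective (Subtype.ext hij) ▸ hi

end EssentialArity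

section Gap

variable {n : ℕ} {f : (Fin n → Bool) → Bool} {d : ℕ}

theorem gapBF_eq_of_essArity_ident (hf : ∀ i, Essential f i) (hd : 0 < d)
    (hle : ∀ i j, i ≠ j → essArity (ident f i j) + d ≤ n)
    (hge : ∃ i j, i ≠ j ∧ n ≤ essArity (ident f i j) + d) : gapBF ⟨n, f⟩ = d := by
  have hess := essArity_eq_of_forall_essential hf
  obtain ⟨i, j, hij, hge⟩ := hge
  have : Nonempty (Fin n) := ⟨i⟩
  have hstrict : StrictMinor ⟨n, ident f i j⟩ ⟨n, f⟩ := by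
    refine ⟨ident_minor f i j, fun h => ?_⟩
    have : essArity f ≤ essArity (ident f i j) := h.essArity_le
    have := hle i j hij
    lia
  refine IsLeast.csInf_eq ⟨⟨_, hstrict, ?_⟩, ?_⟩
  · have := hle i j hij
    change d = essArity f - essArity (ident f i j)
    lia
  · rintro _ ⟨⟨m, g⟩, hg, rfl⟩
    obtain ⟨i', j', hij', hminor⟩ := hg.exists_minor_ident
    have hmono : essArity g ≤ essArity (ident f i' j') := hminor.essArity_le
    have := hle i' j' hij'
    change d ≤ essArity f - essArity g
    lia

theorem gapBF_eq_one_of_not_losesTwo (hf : ∀ i, Essential f i) (h : ¬ LosesTwo f) :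
    gapBF ⟨n, f⟩ = 1 := by
  simp only [losesTwo_iff, not_forall, not_exists, not_and] at h
  obtain ⟨i, j, hij, h⟩ := h
  refine gapBF_eq_of_essArity_ident hf one_pos (fun i j hij => ?_) ⟨i, j, hij, ?_⟩
  · simpa using essArity_add_card_le (S := {i}) (by simpa using inessential_ident_self hij)
  · refine le_essArity_add_card (S := {i}) fun k hk => ?_
    exact not_not.1 (mt not_essential_iff.1 (h k (by simpa using hk)))

theorem gapBF_eq_two_of_losesTwo (hf : ∀ i, Essential f i) (h : LosesTwo f)
    (hess : ∃ i j k, i ≠ j ∧ ∀ t, t ≠ i → t ≠ k → Essential (ident f i j) t) :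
    gapBF ⟨n, f⟩ = 2 := by
  obtain ⟨i, j, k, hij, hess⟩ := hess
  refine gapBF_eq_of_essArity_ident hf two_pos (fun i j hij => ?_) ⟨i, j, hij, ?_⟩
  · obtain ⟨k, hki, hk⟩ := losesTwo_iff.1 h i j hij
    rw [← Finset.card_pair hki.symm]
    exact essArity_add_card_le (by simpa using ⟨inessential_ident_self hij, hk⟩)
  · calc n ≤ essArity (ident f i j) + #{i, k} :=
          le_essArity_add_card fun t ht => by
            simp only [Finset.mem_insert, Finset.mem_singleton, not_or] at ht
            exact hess t ht.1 ht.2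
      _ ≤ essArity (ident f i j) + 2 := by gcongr; exact Finset.card_le_two

end Gap

section Listed

theorem fH_gapE1 (m : ℕ) (c : Bool) (a : Fin m → Bool) : fH (gapE1 m c) a = (parity a ^^ c) := by
  have hlinear : #{E ∈ Finset.univ.image fun i : Fin m => ({i} : Finset (Fin m)) |
      ∀ i ∈ E, a i = true} = #{i | a i = true} := by
    rw [Finset.filter_image, Finset.card_image_of_injective _ Finset.singleton_injective]
    simp only [Finset.mem_singleton, forall_eq]
  have hconst : #{E ∈ (cEdges c : Finset (Finset (Fin m))) | ∀ i ∈ E, a i = true} = c.toNat := by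
    cases c
    · rfl
    · exact congrArg Finset.card (Finset.filter_true_of_mem (by simp [cEdges]))
  have hdisj : Disjoint (Finset.univ.image fun i : Fin m => ({i} : Finset (Fin m))) (cEdges c) := by
    rw [Finset.disjoint_left]
    cases c <;> simp [cEdges]
  rw [fH, gapE1, Finset.filter_union,
    Finset.card_union_of_disjoint (Finset.disjoint_filter_filter hdisj), hlinear, hconst, parity]
  cases c
  · exact (Bool.xor_false _).symm
  · exact (decide_eq_decide.2 Nat.odd_add_one).trans (decide_not.trans (Bool.xor_true _).symm)

theorem fH_gapE2 (c : Bool) (a : Fin 2 → Bool) :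
    fH (gapE2 c) a = ((a 0 && a 1) ^^ a 0 ^^ c) := by
  revert c a; decide

theorem fH_gapE3 (c : Bool) (a : Fin 3 → Bool) :
    fH (gapE3 c) a = (majority (a 0) (a 1) (a 2) ^^ c) := by
  revert c a; decide

theorem fH_gapE4 (c : Bool) (a : Fin 3 → Bool) :
    fH (gapE4 c) a = (majority (a 0) (a 1) (!a 2) ^^ c) := by
  revert c a; decide

theorem fH_gapE1_flipAt {m : ℕ} (c : Bool) (i : Fin m) (a : Fin m → Bool) :
    fH (gapE1 m c) (flipAt i a) = !fH (gapE1 m c) a := by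
  rw [fH_gapE1, fH_gapE1, parity_flipAt, Bool.not_xor]

theorem gapBF_gapE1 {m : ℕ} (hm : 2 ≤ m) (c : Bool) : gapBF ⟨m, fH (gapE1 m c)⟩ = 2 := by
  have hflip (i : Fin m) (a : Fin m → Bool) : fH (gapE1 m c) (flipAt i a) ≠ fH (gapE1 m c) a := by
    rw [fH_gapE1_flipAt]
    exact Bool.not_ne_self _
  have hij : (⟨0, by lia⟩ : Fin m) ≠ ⟨1, by lia⟩ := by simp
  refine gapBF_eq_two_of_losesTwo (fun i => ?_) (fun i j _ => Or.inl fun a _ => ?_)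
    ⟨_, _, ⟨1, by lia⟩, hij, fun t ht₀ ht₁ => ?_⟩
  · exact not_not.1 fun h => hflip i (fun _ => false) (not_essential_iff.1 h _)
  · rw [fH_gapE1_flipAt, fH_gapE1_flipAt, Bool.not_not]
  · refine not_not.1 fun h => hflip t (fun _ => false) ?_
    exact (inessential_ident_iff hij ht₀ ht₁).1 (not_essential_iff.1 h) _ rfl

theorem gapBF_gapE2 (c : Bool) : gapBF ⟨2, fH (gapE2 c)⟩ = 2 := by
  rw [funext (fH_gapE2 c)]
  refine gapBF_eq_two_of_losesTwo ?_ (losesTwo_iff.2 ?_) ⟨0, 1, 1, by decide, by lia⟩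
  · unfold Essential; revert c; decide
  · unfold Inessential ident; revert c; decide

theorem gapBF_gapE3 (c : Bool) : gapBF ⟨3, fH (gapE3 c)⟩ = 2 := by
  rw [funext (fH_gapE3 c)]
  refine gapBF_eq_two_of_losesTwo ?_ (losesTwo_iff.2 ?_) ⟨0, 1, 2, by decide, ?_⟩
  · unfold Essential; revert c; decide
  · unfold Inessential ident; revert c; decide
  · unfold Essential ident; revert c; decide

theorem gapBF_gapE4 (c : Bool) : gapBF ⟨3, fH (gapE4 c)⟩ = 2 := by
  rw [funext (fH_gapE4 c)]
  refine gapBF_eq_two_of_losesTwo ?_ (losesTwo_iff.2 ?_) ⟨0, 1, 2, by decide, ?_⟩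
  · unfold Essential; revert c; decide
  · unfold Inessential ident; revert c; decide
  · unfold Essential ident; revert c; decide

/-- Up to permutation of variables and inessential variables, `f` is one of the four functions of
the classification. -/
def IsListed (f : BF) : Prop :=
  ∃ c : Bool,
    (∃ m : ℕ, 2 ≤ m ∧ EquivBF f ⟨m, fH (gapE1 m c)⟩) ∨
    EquivBF f ⟨2, fH (gapE2 c)⟩ ∨
    EquivBF f ⟨3, fH (gapE3 c)⟩ ∨
    EquivBF f ⟨3, fH (gapE4 c)⟩

theorem IsListed.gapBF_eq_two {f : BF} (h : IsListed f) : gapBF f = 2 := by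
  obtain ⟨c, ⟨m, hm, h⟩ | h | h | h⟩ := h
  · rw [h.gapBF_eq, gapBF_gapE1 hm]
  · rw [h.gapBF_eq, gapBF_gapE2]
  · rw [h.gapBF_eq, gapBF_gapE3]
  · rw [h.gapBF_eq, gapBF_gapE4]

theorem IsListed.of_equivBF {f g : BF} (hg : IsListed g) (h : EquivBF f g) : IsListed f := by
  obtain ⟨c, ⟨m, hm, hg⟩ | hg | hg | hg⟩ := hg
  · exact ⟨c, Or.inl ⟨m, hm, h.trans hg⟩⟩
  · exact ⟨c, Or.inr (Or.inl (h.trans hg))⟩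
  · exact ⟨c, Or.inr (Or.inr (Or.inl (h.trans hg)))⟩
  · exact ⟨c, Or.inr (Or.inr (Or.inr (h.trans hg)))⟩

theorem isListed_of_eq_parity {n : ℕ} {f : (Fin n → Bool) → Bool} {c : Bool} (hn : 2 ≤ n)
    (h : ∀ a, f a = (parity a ^^ c)) : IsListed ⟨n, f⟩ :=
  ⟨c, Or.inl ⟨n, hn,
    equivBF_of_bijective (σ := id) (fun a => (h a).trans (fH_gapE1 n c a).symm)
      Function.bijective_id⟩⟩

theorem eq_of_apply_true_true : ∀ g : Bool → Bool → Bool, g true true = g false false →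
    (∀ x y, g x y = g false false) ∨
    (∀ x y, g x y = ((x ^^ y) ^^ g false false)) ∨
    (∀ x y, g x y = ((x && y) ^^ x ^^ g false false)) ∨
    ∀ x y, g x y = ((y && x) ^^ y ^^ g false false) := by
  decide

theorem isListed_of_losesTwo_fin_two {f : (Fin 2 → Bool) → Bool} (hess : ∃ i, Essential f i)
    (h : LosesTwo f) : IsListed ⟨2, f⟩ := by
  have heta (a : Fin 2 → Bool) : f a = f ![a 0, a 1] := congrArg f (FinVec.etaExpand_eq a).symm
  have hmerged : MergedInessential f 0 1 :=
    (h 0 1 (by decide)).resolve_right fun ⟨k, hk₀, hk₁, _⟩ => by lia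
  have hdiag : f ![true, true] = f ![false, false] :=
    (congrArg f (by decide)).trans (hmerged ![false, false] rfl)
  obtain hconst | hparity | hgap | hgap := eq_of_apply_true_true (fun x y => f ![x, y]) hdiag
  · obtain ⟨i, a, b, -, hne⟩ := hess
    exact absurd (by rw [heta, heta b, hconst, hconst (b 0)]) hne
  · have htwo : ∀ a : Fin 2 → Bool, (a 0 ^^ a 1) = parity a := by decide
    exact isListed_of_eq_parity (c := f ![false, false]) le_rfl fun a => by
      rw [heta, hparity, htwo]
  · exact ⟨_, Or.inr (Or.inl (equivBF_of_bijective (σ := id)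
      (fun a => (heta a).trans ((hgap _ _).trans (fH_gapE2 _ a).symm)) Function.bijective_id))⟩
  · exact ⟨_, Or.inr (Or.inl (equivBF_of_bijective (σ := ![1, 0])
      (fun a => (heta a).trans ((hgap _ _).trans (fH_gapE2 _ (a ∘ ![1, 0])).symm)) (by decide)))⟩

theorem bijective_vec_three {n : ℕ} {i j k : Fin n} (hij : i ≠ j) (hki : k ≠ i) (hkj : k ≠ j)
    (hall : ∀ t, t = i ∨ t = j ∨ t = k) : Function.Bijective ![i, j, k] := by
  refine ⟨fun x y => ?_, fun t => ?_⟩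
  · fin_cases x <;> fin_cases y <;> simp [hij, hij.symm, hki, hki.symm, hkj, hkj.symm]
  · obtain rfl | rfl | rfl := hall t
    exacts [⟨0, rfl⟩, ⟨1, rfl⟩, ⟨2, rfl⟩]

theorem isListed_of_losesTwo {n : ℕ} {f : (Fin n → Bool) → Bool} (hn : 2 ≤ n)
    (hess : ∀ i, Essential f i) (h : LosesTwo f) : IsListed ⟨n, f⟩ := by
  have hess' (i : Fin n) : ¬ Inessential f i := fun hi => not_essential_iff.2 hi (hess i)
  obtain rfl | hn := hn.eq_or_lt
  · exact isListed_of_losesTwo_fin_two ⟨0, hess 0⟩ h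
  by_cases hmerged : ∀ i j, i ≠ j → MergedInessential f i j
  · refine isListed_of_eq_parity hn.le (eq_parity_of_mergedInessential ?_ ⟨⟨0, by lia⟩, hess' _⟩
      hmerged)
    rwa [Fintype.card_fin]
  push Not at hmerged
  obtain ⟨i, j, hij, hmerged⟩ := hmerged
  obtain ⟨i, j, k, hij, hki, hkj, hall, c, hf | hf⟩ := exists_eq_majority_of_losesTwo hess' h
    ⟨i, j, hij, (h i j hij).resolve_left hmerged⟩
  all_goals have hbij := bijective_vec_three hij hki hkj hall
  · exact ⟨c, Or.inr (Or.inr (Or.inl (equivBF_of_bijective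
      (fun a => (hf a).trans (fH_gapE3 c (a ∘ ![i, j, k])).symm) hbij)))⟩
  · exact ⟨c, Or.inr (Or.inr (Or.inr (equivBF_of_bijective
      (fun a => (hf a).trans (fH_gapE4 c (a ∘ ![i, j, k])).symm) hbij)))⟩

theorem gapBF_eq_one_or_isListed {f : BF} (h2 : 2 ≤ essArity f.2) :
    gapBF f = 1 ∨ IsListed f := by
  obtain ⟨⟨n, g⟩, hfg, hess⟩ := exists_equivBF_forall_essential f (by lia)
  have hn : 2 ≤ n := by rwa [hfg.essArity_eq, essArity_eq_of_forall_essential hess] at h2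
  by_cases h : LosesTwo g
  · exact Or.inr ((isListed_of_losesTwo hn hess h).of_equivBF hfg)
  · exact Or.inl (hfg.gapBF_eq.trans (gapBF_eq_one_of_not_losesTwo hess h))

end Listed

theorem arity_gap_classification (f : BF) (h2 : 2 ≤ essArity f.2) :
    (gapBF f = 2 ↔ ∃ c : Bool,
      (∃ m : ℕ, 2 ≤ m ∧ EquivBF f ⟨m, fH (gapE1 m c)⟩) ∨
      EquivBF f ⟨2, fH (gapE2 c)⟩ ∨
      EquivBF f ⟨3, fH (gapE3 c)⟩ ∨
      EquivBF f ⟨3, fH (gapE4 c)⟩) ∧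
    (gapBF f = 1 ∨ gapBF f = 2) := by
  change (gapBF f = 2 ↔ IsListed f) ∧ _
  have hgap : gapBF f = 1 ∨ IsListed f := gapBF_eq_one_or_isListed h2
  refine ⟨⟨fun h => hgap.resolve_left (by lia), IsListed.gapBF_eq_two⟩, ?_⟩
  exact hgap.imp_right IsListed.gapBF_eq_two
end

section
/- (Salomaa) Every Boolean function f with at least two essential variables has arity gap at most 2. -/
open Finset

/-!
Among the identification minors `f_{i=j}` with `i ≠ j` essential, take one with the most essential
variables, and let `S` be its set of essential variables. If it lost three or more of the variables
of `f`, one of them is some `t ≠ i, j`. As `f_{i=j}` does not depend on `t`, it is also the result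
of identifying `i` with `j` in `f_{t=i}` or in `f_{t=j}`; by maximality, `i ↦ j` therefore maps the
essential variables of both of these minors onto `S`. For every input `a`, two of the bits `a i`,
`a j`, `a t` agree, so the three minors together determine `f`. If `j ∈ S`, there is a third lost
variable `k ≠ i, j, t`, on which none of the three minors depends, hence neither does `f`. If
`j ∉ S`, neither `f_{t=i}` nor `f_{t=j}` depends on `i`, so both are equal to `f_{i=j}`, and then so
is `f`, although it depends on `i`.
-/

section EssentialVars

variable {ι : Type*} {α : ι → Type*} {β : Type*}

lemma dependsOn_inter {f : (Π i, α i) → β} {s t : Set ι} (hs : DependsOn f s)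
    (ht : DependsOn f t) : DependsOn f (s ∩ t) := by
  classical
  intro a b hab
  calc f a = f (s.piecewise a b) := hs fun i hi => (Set.piecewise_eq_of_mem s a b hi).symm
    _ = f b := ht fun i hi => by
      by_cases his : i ∈ s
      · rw [Set.piecewise_eq_of_mem s a b his, hab i ⟨his, hi⟩]
      · exact Set.piecewise_eq_of_notMem s a b his

/-- The essential variables of a function of several variables. This is the notion `Essential` for
arbitrary index types, domains and codomains, phrased through Mathlib's `DependsOn`. -/
def essentialVars (f : (Π i, α i) → β) : Set ι :=
  {i | ¬ DependsOn f {i}ᶜ}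

lemma notMem_essentialVars {f : (Π i, α i) → β} {i : ι} :
    i ∉ essentialVars f ↔ DependsOn f {i}ᶜ :=
  not_not

lemma dependsOn_essentialVars [Finite ι] (f : (Π i, α i) → β) :
    DependsOn f (essentialVars f) := by
  suffices h : ∀ s : Set ι, Disjoint s (essentialVars f) → DependsOn f sᶜ by
    simpa using h (essentialVars f)ᶜ disjoint_compl_left
  intro s
  induction s, s.toFinite using Set.Finite.induction_on with
  | empty => exact fun _ => by simpa using dependsOn_univ f
  | @insert i s _ _ ih =>
    rw [Set.disjoint_insert_left, Set.insert_eq, Set.compl_union]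
    exact fun ⟨hi, hs⟩ => dependsOn_inter (notMem_essentialVars.1 hi) (ih hs)

end EssentialVars

section Minors

variable {ι κ α β : Type*}

lemma essentialVars_comp_subset [Finite ι] (f : (ι → α) → β) (σ : ι → κ) :
    essentialVars (fun a => f (a ∘ σ)) ⊆ σ '' essentialVars f := by
  intro k hk
  by_contra hkσ
  exact hk fun a b hab => dependsOn_essentialVars f fun i hi =>
    hab (σ i) fun hik => hkσ ⟨i, hi, hik⟩

variable [DecidableEq ι]

/-- The identification minor `f_{i=j}`: the `i`-th argument of `f` is replaced by the `j`-th one.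
The index type is kept, so that `i` becomes an inessential variable when
`i ≠ j`. -/
def identify (f : (ι → α) → β) (i j : ι) : (ι → α) → β :=
  fun a => f (a ∘ Function.update id i j)

variable {f : (ι → α) → β} {i j t l : ι}

lemma identify_apply_of_eq {a : ι → α} (h : a i = a j) : identify f i j a = f a := by
  rw [identify, Function.comp_update, ← h]
  exact congrArg f (Function.update_eq_self i a)

lemma identify_eq_self_of_notMem (hi : i ∉ essentialVars f) : identify f i j = f :=
  funext fun a => notMem_essentialVars.1 hi fun k hk => by
    simp [Function.update_of_ne (show k ≠ i from hk)]

lemma identify_identify (hl : l = i ∨ l = j) :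
    identify (identify f t l) i j = identify (identify f i j) t j := by
  funext a
  refine congrArg f (funext fun k => ?_)
  grind [Function.update_apply]

lemma notMem_essentialVars_identify (hij : i ≠ j) : i ∉ essentialVars (identify f i j) := by
  refine notMem_essentialVars.2 fun a b hab => congrArg f (funext fun k => hab _ ?_)
  grind [Function.update_apply]

lemma essentialVars_identify_subset (hj : j ∈ essentialVars f) :
    essentialVars (identify f i j) ⊆ essentialVars f := by
  intro k hk
  by_contra hkf
  have hjk : j ≠ k := ne_of_mem_of_not_mem hj hkf
  refine hk fun a b hab => notMem_essentialVars.1 hkf fun l hl => hab _ ?_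
  grind [Function.update_apply]

variable [Finite ι]

lemma ncard_essentialVars_identify_lt (hi : i ∈ essentialVars f) (hj : j ∈ essentialVars f)
    (hij : i ≠ j) : (essentialVars (identify f i j)).ncard < (essentialVars f).ncard :=
  Set.ncard_lt_ncard
    ((Set.ssubset_iff_of_subset (essentialVars_identify_subset hj)).2
      ⟨i, hi, notMem_essentialVars_identify hij⟩)

lemma image_essentialVars_identify_of_ncard_le (hl : l = i ∨ l = j)
    (ht : t ∉ essentialVars (identify f i j))
    (hle : (essentialVars (identify f t l)).ncard ≤ (essentialVars (identify f i j)).ncard) :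
    Function.update id i j '' essentialVars (identify f t l) = essentialVars (identify f i j) := by
  have hcomm : identify (identify f t l) i j = identify f i j :=
    (identify_identify hl).trans (identify_eq_self_of_notMem ht)
  have hsub : essentialVars (identify (identify f t l) i j) ⊆
      Function.update id i j '' essentialVars (identify f t l) :=
    essentialVars_comp_subset (identify f t l) _
  rw [hcomm] at hsub
  exact (Set.eq_of_subset_of_ncard_le hsub ((Set.ncard_image_le).trans hle)).symm

lemma notMem_essentialVars_identify_of_ncard_le {k : ι} (hki : k ≠ i)
    (hl : l = i ∨ l = j) (ht : t ∉ essentialVars (identify f i j))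
    (hle : (essentialVars (identify f t l)).ncard ≤ (essentialVars (identify f i j)).ncard)
    (hk : k ∉ essentialVars (identify f i j)) : k ∉ essentialVars (identify f t l) := by
  rw [← image_essentialVars_identify_of_ncard_le hl ht hle] at hk
  exact fun hkl => hk ⟨k, hkl, by simp [hki]⟩

lemma identify_eq_identify_of_ncard_le (hl : l = i ∨ l = j)
    (ht : t ∉ essentialVars (identify f i j))
    (hle : (essentialVars (identify f t l)).ncard ≤ (essentialVars (identify f i j)).ncard)
    (hj : j ∉ essentialVars (identify f i j)) : identify f t l = identify f i j := by
  have hi : i ∉ essentialVars (identify f t l) := by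
    rw [← image_essentialVars_identify_of_ncard_le hl ht hle] at hj
    exact fun hil => hj ⟨i, hil, by simp⟩
  rw [← identify_eq_self_of_notMem (j := j) hi, identify_identify hl, identify_eq_self_of_notMem ht]

end Minors

section PseudoBoolean

variable {ι β : Type*} [DecidableEq ι] {f : (ι → Bool) → β} {i j t : ι}

lemma bool_eq_or_eq_or_eq : ∀ x y z : Bool, x = y ∨ z = x ∨ z = y := by
  decide

lemma eq_of_identify_eq {g : (ι → Bool) → β} (hij : identify f i j = g)
    (hti : identify f t i = g) (htj : identify f t j = g) : f = g := by
  funext a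
  rcases bool_eq_or_eq_or_eq (a i) (a j) (a t) with h | h | h
  · rw [← hij, identify_apply_of_eq h]
  · rw [← hti, identify_apply_of_eq h]
  · rw [← htj, identify_apply_of_eq h]

lemma notMem_essentialVars_of_identify {k : ι} (hki : k ≠ i) (hkj : k ≠ j) (hkt : k ≠ t)
    (hij : k ∉ essentialVars (identify f i j)) (hti : k ∉ essentialVars (identify f t i))
    (htj : k ∉ essentialVars (identify f t j)) : k ∉ essentialVars f := by
  refine notMem_essentialVars.2 fun a b hab => ?_
  have eq_of_agree : ∀ u v, k ≠ u → k ≠ v → k ∉ essentialVars (identify f u v) → a u = a v →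
      f a = f b := by
    intro u v hku hkv hk ha
    have hb : b u = b v := by rw [← hab u hku.symm, ← hab v hkv.symm, ha]
    rw [← identify_apply_of_eq (f := f) ha, ← identify_apply_of_eq (f := f) hb]
    exact notMem_essentialVars.1 hk hab
  rcases bool_eq_or_eq_or_eq (a i) (a j) (a t) with h | h | h
  · exact eq_of_agree i j hki hkj hij h
  · exact eq_of_agree t i hkt hki hti h
  · exact eq_of_agree t j hkt hkj htj h

lemma ncard_essentialVars_le_of_maximal [Finite ι] (hi : i ∈ essentialVars f)
    (hj : j ∈ essentialVars f) (hij : i ≠ j)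
    (hmax : ∀ u ∈ essentialVars f, ∀ v ∈ essentialVars f, u ≠ v →
      (essentialVars (identify f u v)).ncard ≤ (essentialVars (identify f i j)).ncard) :
    (essentialVars f).ncard ≤ (essentialVars (identify f i j)).ncard + 2 := by
  set S := essentialVars (identify f i j)
  by_contra! hlt
  have exists_lost (x y : ι) : ∃ k ∈ essentialVars f, k ∉ insert x (insert y S) := by
    refine Set.exists_mem_notMem_of_ncard_lt_ncard (lt_of_le_of_lt ?_ hlt)
    grind [Set.ncard_insert_le x (insert y S), Set.ncard_insert_le y S]
  obtain ⟨t, ht, htS⟩ := exists_lost i j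
  simp only [Set.mem_insert_iff, not_or] at htS
  obtain ⟨hti, htj, htS⟩ := htS
  have hle_i := hmax t ht i hi hti
  have hle_j := hmax t ht j hj htj
  by_cases hjS : j ∈ S
  · obtain ⟨k, hk, hkS⟩ := exists_lost i t
    simp only [Set.mem_insert_iff, not_or] at hkS
    obtain ⟨hki, hkt, hkS⟩ := hkS
    have hkj : k ≠ j := fun h => hkS (h ▸ hjS)
    exact notMem_essentialVars_of_identify hki hkj hkt hkS
      (notMem_essentialVars_identify_of_ncard_le hki (.inl rfl) htS hle_i hkS)
      (notMem_essentialVars_identify_of_ncard_le hki (.inr rfl) htS hle_j hkS) hk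
  · have hf : f = identify f i j := eq_of_identify_eq rfl
      (identify_eq_identify_of_ncard_le (.inl rfl) htS hle_i hjS)
      (identify_eq_identify_of_ncard_le (.inr rfl) htS hle_j hjS)
    exact notMem_essentialVars_identify hij (hf ▸ hi)

theorem salomaa_gap_le_two_general [Finite ι] (f : (ι → Bool) → β)
    (h2 : 2 ≤ (essentialVars f).ncard) :
    ∃ i ∈ essentialVars f, ∃ j ∈ essentialVars f, i ≠ j ∧
      (essentialVars f).ncard ≤ (essentialVars (identify f i j)).ncard + 2 := by
  obtain ⟨u, hu, v, hv, huv⟩ := (Set.one_lt_ncard).1 h2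
  obtain ⟨⟨i, j⟩, ⟨hi, hj, hij⟩, hmax⟩ := Set.exists_max_image (essentialVars f).offDiag
    (fun p => (essentialVars (identify f p.1 p.2)).ncard) (Set.toFinite _) ⟨(u, v), hu, hv, huv⟩
  exact ⟨i, hi, j, hj, hij, ncard_essentialVars_le_of_maximal hi hj hij
    fun u hu v hv huv => hmax (u, v) ⟨hu, hv, huv⟩⟩

end PseudoBoolean

section ArityGap

lemma essential_iff_mem_essentialVars {n : ℕ} {f : (Fin n → Bool) → Bool} {i : Fin n} :
    Essential f i ↔ i ∈ essentialVars f := by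
  simp [Essential, essentialVars, DependsOn]

lemma essArity_eq_ncard {n : ℕ} (f : (Fin n → Bool) → Bool) :
    essArity f = (essentialVars f).ncard :=
  Nat.card_congr (Equiv.subtypeEquivRight fun _ => essential_iff_mem_essentialVars)

lemma essArity_le_of_minor {g f : BF} (h : Minor g f) : essArity g.2 ≤ essArity f.2 := by
  obtain ⟨σ, hσ⟩ := h
  rw [essArity_eq_ncard, essArity_eq_ncard, funext hσ]
  exact (Set.ncard_le_ncard (essentialVars_comp_subset f.2 σ)).trans (Set.ncard_image_le)

lemma strictMinor_identify {f : BF} {i j : Fin f.1} (hi : i ∈ essentialVars f.2)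
    (hj : j ∈ essentialVars f.2) (hij : i ≠ j) : StrictMinor ⟨f.1, identify f.2 i j⟩ f := by
  refine ⟨⟨Function.update id i j, fun _ => rfl⟩, fun h => ?_⟩
  have hle := essArity_le_of_minor h
  rw [essArity_eq_ncard, essArity_eq_ncard] at hle
  exact hle.not_gt (ncard_essentialVars_identify_lt hi hj hij)

lemma gapBF_le_of_strictMinor {f g : BF} (h : StrictMinor g f) :
    gapBF f ≤ essArity f.2 - essArity g.2 :=
  Nat.sInf_le ⟨g, h, rfl⟩

lemma gapBF_le_of_ncard_le_add {f : BF} {i j : Fin f.1} {d : ℕ} (hi : i ∈ essentialVars f.2)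
    (hj : j ∈ essentialVars f.2) (hij : i ≠ j)
    (hle : (essentialVars f.2).ncard ≤ (essentialVars (identify f.2 i j)).ncard + d) :
    gapBF f ≤ d := by
  rw [← essArity_eq_ncard, ← essArity_eq_ncard] at hle
  exact (gapBF_le_of_strictMinor (strictMinor_identify hi hj hij)).trans
    (Nat.sub_le_iff_le_add'.2 hle)

end ArityGap

theorem salomaa_gap_le_two (f : BF) (h2 : 2 ≤ essArity f.2) : gapBF f ≤ 2 := by
  obtain ⟨i, hi, j, hj, hij, hle⟩ := salomaa_gap_le_two_general f.2 (essArity_eq_ncard f.2 ▸ h2)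
  exact gapBF_le_of_ncard_le_add hi hj hij hle
end
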